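/- Let k ≥ 1 be a fixed integer and set δ = 1 if k is odd and δ = 2 if k is even. For n ≥ 0 define the polynomial f_n(y) = Σ_{m∈P(n)} y^{B(m)} ∈ ℤ[y], and set f_n(y) = 0 for n < 0. Then for every n ≥ 4 one has, as an identity of polynomials in y: f_n(y) − 2·f_{n−1}(y) − f_{n−2}(y) + 2·f_{n−3}(y) − (y − 1)·(f_{n−(k+δ)}(y) − f_{n−(k+δ+1)}(y)) = 0. -/

import Mathlib

/-- The number of parts of a composition that are even and strictly greater than `k`. -/
def Bstat (k : ℕ) {n : ℕ} (m : Composition n) : ℕ :=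
  m.blocks.countP fun j => decide (Even j ∧ k < j)

/-!
Prepending a part identifies the nonempty compositions with pairs (part, composition), so the
generating function `F` of compositions whose parts carry weights `w` satisfies `F * (1 - W) = 1`,
where `W = ∑ j ≥ 1, w j * X ^ j`. If even parts `≥ e` (with `e` even) have weight `y` and all other
parts weight `1`, then `W = X / (1 - X) + (y - 1) * X ^ e / (1 - X ^ 2)`, hence
`F * (1 - X - 2 * X ^ 2 - (y - 1) * X ^ e) = 1 - X ^ 2`. Multiplied by `1 - X`, the right-hand side
has degree `3`, and the recurrence is the vanishing of its coefficients in degrees `n ≥ 4`.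
-/

open Finset.HasAntidiagonal (antidiagonal mem_antidiagonal)
open PowerSeries
open scoped LaurentSeries

theorem prod_map_ite_eq_pow_countP {M α : Type*} [CommMonoid M] (y : M) (p : α → Prop)
    [DecidablePred p] (l : List α) :
    (l.map fun a ↦ if p a then y else 1).prod = y ^ l.countP p := by
  simp [List.prod_map_ite, List.countP_eq_length_filter]

theorem coeff_coe_X_pow_mul {R : Type*} [Semiring R] (d : ℕ) (φ : R⟦X⟧) (n : ℤ) :
    ((X ^ d * φ : R⟦X⟧) : R⸨X⸩).coeff n = (φ : R⸨X⸩).coeff (n - d) := by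
  rw [PowerSeries.coe_mul, HahnSeries.ofPowerSeries_X_pow, HahnSeries.coeff_single_mul, one_mul]

section CompositionSeries

variable {R : Type*}

/-- The composition of `n + 1` with first part `i + 1` followed by a composition of `j`, where
`i + j = n`. The shift by one makes the first part positive, so that every composition of `n + 1`
arises in exactly one way. -/
def prependPart (n : ℕ) (p : Σ ij : antidiagonal n, Composition ij.1.2) : Composition (n + 1) where
  blocks := (p.1.1.1 + 1) :: p.2.blocks
  blocks_pos hi := by
    rcases List.mem_cons.1 hi with rfl | hi
    · exact Nat.succ_pos _
    · exact p.2.blocks_pos hi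
  blocks_sum := by
    have hsum := mem_antidiagonal.1 p.1.2
    rw [List.sum_cons, p.2.blocks_sum]
    lia

theorem prependPart_injective (n : ℕ) : Function.Injective (prependPart n) := by
  rintro ⟨⟨⟨i, j⟩, hij⟩, c⟩ ⟨⟨⟨i', j'⟩, hij'⟩, c'⟩ h
  obtain ⟨hhead, htail⟩ := List.cons.inj (congrArg Composition.blocks h)
  simp only [mem_antidiagonal] at hij hij'
  obtain rfl : i = i' := Nat.succ.inj hhead
  obtain rfl : j = j' := by lia
  obtain rfl : c = c' := Composition.ext htail
  rfl

theorem prependPart_surjective (n : ℕ) : Function.Surjective (prependPart n) := by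
  rintro ⟨_ | ⟨a, t⟩, hpos, hsum⟩
  · simp at hsum
  · obtain ⟨i, rfl⟩ : ∃ i, a = i + 1 := Nat.exists_eq_add_one.2 (hpos List.mem_cons_self)
    have hij : (i, t.sum) ∈ antidiagonal n := by
      rw [List.sum_cons] at hsum
      rw [mem_antidiagonal]
      lia
    exact ⟨⟨⟨(i, t.sum), hij⟩, ⟨t, fun ht ↦ hpos (List.mem_cons_of_mem _ ht), rfl⟩⟩, rfl⟩

/-- The total weight of the compositions of `n`, a composition being weighted by the product of the
weights `w` of its parts. The value `w 0` is irrelevant. -/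
def compositionSum [Semiring R] (w : ℕ → R) (n : ℕ) : R :=
  ∑ c : Composition n, (c.blocks.map w).prod

theorem compositionSum_zero [Semiring R] (w : ℕ → R) : compositionSum w 0 = 1 := by
  have hblocks (c : Composition 0) : c.blocks = [] := c.blocks_eq_nil.2 rfl
  simp [compositionSum, hblocks, composition_card]

theorem compositionSum_succ [Semiring R] (w : ℕ → R) (n : ℕ) :
    compositionSum w (n + 1) =
      ∑ ij ∈ antidiagonal n, w (ij.1 + 1) * compositionSum w ij.2 := by
  have hbij : Function.Bijective (prependPart n) :=
    ⟨prependPart_injective n, prependPart_surjective n⟩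
  rw [compositionSum, ← hbij.sum_comp, Fintype.sum_sigma,
    ← Finset.sum_coe_sort (antidiagonal n) fun ij ↦ w (ij.1 + 1) * compositionSum w ij.2]
  simp only [prependPart, List.map_cons, List.prod_cons, compositionSum, Finset.mul_sum]

/-- The generating function of `compositionSum w`. -/
def compositionSeries [Semiring R] (w : ℕ → R) : R⟦X⟧ :=
  PowerSeries.mk (compositionSum w)

/-- The generating function `∑ j ≥ 1, w j * X ^ j` of the weights of single parts. -/
noncomputable def partSeries [Semiring R] (w : ℕ → R) : R⟦X⟧ :=
  X * PowerSeries.mk fun i ↦ w (i + 1)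

theorem partSeries_eq_mk_sub [Ring R] (w : ℕ → R) :
    partSeries w = PowerSeries.mk w - C (w 0) := by
  simpa [partSeries] using (sub_const_eq_X_mul_shift (PowerSeries.mk w)).symm

theorem compositionSeries_eq_one_add [Semiring R] (w : ℕ → R) :
    compositionSeries w = 1 + partSeries w * compositionSeries w := by
  ext n
  rcases n with _ | n
  · simp [compositionSeries, partSeries, compositionSum_zero]
  · rw [partSeries, mul_assoc, map_add, coeff_succ_X_mul, coeff_mul]
    simp [compositionSeries, compositionSum_succ, coeff_one]

theorem one_sub_partSeries_mul_compositionSeries [Ring R] (w : ℕ → R) :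
    (1 - partSeries w) * compositionSeries w = 1 := by
  rw [sub_mul, one_mul, sub_eq_iff_eq_add]
  exact compositionSeries_eq_one_add w

/-- The extension of `compositionSum w` to integer arguments, zero on the negative ones. -/
def compositionSumInt [Semiring R] (w : ℕ → R) (n : ℤ) : R :=
  if 0 ≤ n then compositionSum w n.toNat else 0

theorem coeff_coe_compositionSeries [Semiring R] (w : ℕ → R) (n : ℤ) :
    (compositionSeries w : R⸨X⸩).coeff n = compositionSumInt w n := by
  rcases n with n | n <;> simp [PowerSeries.coeff_coe, compositionSeries, compositionSumInt]

end CompositionSeries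

section LargeEvenParts

variable {R : Type*}

/-- The weight of the part `j` when the even parts that are at least `e` are marked by `y`. -/
def evenPartWeight [One R] (y : R) (e j : ℕ) : R :=
  if Even j ∧ e ≤ j then y else 1

theorem evenPartWeight_add_two [Ring R] (y : R) {e : ℕ} (he : Even e) (j : ℕ) :
    evenPartWeight y e (j + 2) = evenPartWeight y e j + if j + 2 = e then y - 1 else 0 := by
  have hthreshold : Even j → (e ≤ j + 2 ↔ e ≤ j ∨ j + 2 = e) := by grind
  grind [evenPartWeight]

theorem one_sub_X_sq_mul_mk_evenPartWeight [Ring R] (y : R) {e : ℕ} (he : Even e) :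
    (1 - X ^ 2) * PowerSeries.mk (evenPartWeight y e) = 1 + X + (y - 1) • X ^ e := by
  rw [sub_mul, one_mul, sub_eq_iff_eq_add]
  ext n
  simp only [map_add, map_smul, coeff_mk, coeff_one, coeff_X, coeff_X_pow, coeff_X_pow_mul',
    smul_eq_mul]
  rcases n with _ | _ | n
  · by_cases h : e = 0 <;> simp [evenPartWeight, h, Ne.symm]
  · have h : 1 ≠ e := by grind
    simp [evenPartWeight, h]
  · simp [evenPartWeight_add_two y he n, add_comm (evenPartWeight y e n)]

theorem mul_compositionSeries_evenPartWeight [CommRing R] (y : R) {e : ℕ} (he : Even e)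
    (hpos : 0 < e) :
    (1 - X - 2 * X ^ 2 - (y - 1) • X ^ e) * compositionSeries (evenPartWeight y e) =
      1 - X ^ 2 := by
  have hzero : evenPartWeight y e 0 = 1 := if_neg (by lia)
  have hinv := one_sub_partSeries_mul_compositionSeries (evenPartWeight y e)
  rw [partSeries_eq_mk_sub, hzero, map_one] at hinv
  linear_combination (1 - X ^ 2) * hinv + compositionSeries (evenPartWeight y e) *
    one_sub_X_sq_mul_mk_evenPartWeight y he

theorem compositionSumInt_evenPartWeight_recurrence [CommRing R] (y : R) {e : ℕ} (he : Even e)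
    (hpos : 0 < e) {n : ℤ} (hn : 4 ≤ n) :
    let c := compositionSumInt (evenPartWeight y e)
    c n - 2 * c (n - 1) - c (n - 2) + 2 * c (n - 3) -
      (y - 1) * (c (n - e) - c (n - (e + 1))) = 0 := by
  intro c
  set F := compositionSeries (evenPartWeight y e) with hF
  -- Every term is written as `X ^ d * φ`, so that `coeff_coe_X_pow_mul` reads off all coefficients.
  have hseries : X ^ 0 * F - (2 : R) • (X ^ 1 * F) - X ^ 2 * F + (2 : R) • (X ^ 3 * F) -
      (y - 1) • (X ^ e * F - X ^ (e + 1) * F) =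
        X ^ 0 * 1 - X ^ 1 * 1 - X ^ 2 * 1 + X ^ 3 * 1 := by
    have hgen := mul_compositionSeries_evenPartWeight y he hpos
    simp only [smul_eq_C_mul, map_ofNat] at hgen ⊢
    linear_combination (1 - X) * hgen
  have hone (d : ℕ) (hd : d < 4) : ((1 : R⟦X⟧) : R⸨X⸩).coeff (n - d) = 0 := by
    have hnd : n - d ≠ 0 := by lia
    simp [HahnSeries.coeff_one, hnd]
  have hcoeff := congrArg (fun φ : R⟦X⟧ ↦ (φ : R⸨X⸩).coeff n) hseries
  simp only [PowerSeries.coe_add, PowerSeries.coe_sub, PowerSeries.coe_smul, HahnSeries.coeff_add,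
    HahnSeries.coeff_sub, HahnSeries.coeff_smul, coeff_coe_X_pow_mul, smul_eq_mul, hF,
    coeff_coe_compositionSeries, hone 0 (by lia), hone 1 (by lia), hone 2 (by lia),
    hone 3 (by lia)] at hcoeff
  simpa [c] using hcoeff

end LargeEvenParts

theorem stmt3 (k : ℕ) (hk : 1 ≤ k) (δ : ℕ) (hδ : δ = if Odd k then 1 else 2)
    (f : ℤ → Polynomial ℤ)
    (hf : ∀ n : ℤ, f n =
      if 0 ≤ n then ∑ m : Composition n.toNat, Polynomial.X ^ Bstat k m else 0)
    (n : ℤ) (hn : 4 ≤ n) :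
    f n - 2 * f (n - 1) - f (n - 2) + 2 * f (n - 3)
        - (Polynomial.X - 1) * (f (n - (k + δ)) - f (n - (k + δ + 1))) = 0 := by
  have heven : Even (k + δ) := by grind
  have hweight (j : ℕ) : (if Even j ∧ k < j then Polynomial.X else 1) =
      evenPartWeight (Polynomial.X : Polynomial ℤ) (k + δ) j := by
    have hthreshold : Even j → (k < j ↔ k + δ ≤ j) := by grind
    simp only [evenPartWeight, and_congr_right hthreshold]
  have hsum (n : ℤ) : f n = compositionSumInt (evenPartWeight Polynomial.X (k + δ)) n := by
    simp only [hf, compositionSumInt, compositionSum, Bstat, ← prod_map_ite_eq_pow_countP, hweight]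
  have hrec := compositionSumInt_evenPartWeight_recurrence (Polynomial.X : Polynomial ℤ) heven
    (by lia) hn
  simpa only [hsum, Nat.cast_add] using hrec
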